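/- The five functions from 3×3 complex matrices to ℂ given by x ↦ Tr(x³), x ↦ Tr(x²·xᵀ), x ↦ Tr(x²)·Tr(x), x ↦ Tr(x·xᵀ)·Tr(x), and x ↦ Tr(x)³ are linearly independent over ℂ. -/

import Mathlib

open Matrix

/-!
Each of the five invariants contains a monomial that occurs in none of the others: for distinct
indices `i`, `j`, `k` these are `x_ij x_jk x_ki`, `x_ij x_jk x_ik`, `x_ii x_jk x_kj`, `x_ii x_jk²`
and `x_ii x_jj x_kk`, with coefficients `3`, `1`, `2`, `1` and `6`. A linear relation is therefore
tested on 0/1 matrices, viewed as adjacency matrices of digraphs on `i`, `j`, `k`: the supports of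
the first four monomials and a single loop. Solving the resulting system only requires cancelling
the factors `2` and `3`.
-/

section DegreeThreeInvariant

variable {n R : Type*} [Fintype n]

/-- The products of traces of words in `x` and `xᵀ` of total degree three. Over `ℂ` they span the
cubic polynomial invariants of the conjugation action of the orthogonal group. Words are listed up
to cyclic rotation and transposition, neither of which changes the trace over a commutative ring. -/
def degreeThreeInvariant [Semiring R] : Fin 5 → Matrix n n R → R :=
  ![fun x => (x * x * x).trace,
    fun x => (x * x * xᵀ).trace,
    fun x => (x * x).trace * x.trace,
    fun x => (x * xᵀ).trace * x.trace,
    fun x => x.trace ^ 3]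

section Digraphs

variable [DecidableEq n] [Semiring R] {i j k : n}

theorem degreeThreeInvariant_loop (i : n) (a : Fin 5) :
    degreeThreeInvariant a (single i i (1 : R)) = 1 := by
  fin_cases a <;> simp [degreeThreeInvariant]

theorem degreeThreeInvariant_loop_add_edge (hij : i ≠ j) (hik : i ≠ k) (hjk : j ≠ k) (a : Fin 5) :
    degreeThreeInvariant a (single i i (1 : R) + single j k 1) = ![1, 1, 1, 2, 1] a := by
  fin_cases a <;>
    norm_num [degreeThreeInvariant, add_mul, mul_add, hij, hik, hjk, hik.symm, hjk.symm]

theorem degreeThreeInvariant_loop_add_two_cycle (hij : i ≠ j) (hik : i ≠ k) (hjk : j ≠ k)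
    (a : Fin 5) :
    degreeThreeInvariant a (single i i (1 : R) + single j k 1 + single k j 1) =
      ![1, 1, 3, 3, 1] a := by
  fin_cases a <;>
    norm_num [degreeThreeInvariant, add_mul, mul_add, hij, hik, hjk, hij.symm, hik.symm, hjk.symm]

theorem degreeThreeInvariant_transitive_triangle (hij : i ≠ j) (hik : i ≠ k) (hjk : j ≠ k)
    (a : Fin 5) :
    degreeThreeInvariant a (single i j (1 : R) + single j k 1 + single i k 1) =
      ![0, 1, 0, 0, 0] a := by
  fin_cases a <;>
    simp [degreeThreeInvariant, add_mul, mul_add, hij, hik, hjk, hij.symm, hik.symm, hjk.symm]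

theorem degreeThreeInvariant_three_cycle (hij : i ≠ j) (hik : i ≠ k) (hjk : j ≠ k) (a : Fin 5) :
    degreeThreeInvariant a (single i j (1 : R) + single j k 1 + single k i 1) =
      ![3, 0, 0, 0, 0] a := by
  fin_cases a <;>
    norm_num [degreeThreeInvariant, add_mul, mul_add, hij, hik, hjk, hij.symm, hik.symm, hjk.symm]

end Digraphs

theorem linearIndependent_degree_three_invariants_general [Ring R] (h6 : IsRightRegular (6 : R))
    (hn : 3 ≤ Fintype.card n) :
    LinearIndependent R (degreeThreeInvariant : Fin 5 → Matrix n n R → R) := by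
  classical
  obtain ⟨i, j, k, hij, hik, hjk⟩ := Fintype.two_lt_card_iff.mp hn
  have h2 : IsRightRegular (2 : R) := .of_mul (a := 3) (by norm_num [h6])
  have h3 : IsRightRegular (3 : R) := .of_mul (a := 2) (by norm_num [h6])
  rw [Fintype.linearIndependent_iff]
  intro g hg
  have relation {x : Matrix n n R} {v : Fin 5 → R} (hv : ∀ a, degreeThreeInvariant a x = v a) :
      ∑ a, g a * v a = 0 := by
    simpa [hv] using congrFun hg x
  have g0 : g 0 = 0 := by
    simpa [Fin.sum_univ_five, h3] using relation (degreeThreeInvariant_three_cycle hij hik hjk)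
  have g1 : g 1 = 0 := by
    simpa [Fin.sum_univ_five] using relation (degreeThreeInvariant_transitive_triangle hij hik hjk)
  have loop : g 2 + g 3 + g 4 = 0 := by
    simpa [Fin.sum_univ_five, g0, g1] using relation (degreeThreeInvariant_loop i)
  have loop_edge : g 2 + g 3 * 2 + g 4 = 0 := by
    simpa [Fin.sum_univ_five, g0, g1] using
      relation (degreeThreeInvariant_loop_add_edge hij hik hjk)
  have loop_cycle : g 2 * 3 + g 3 * 3 + g 4 = 0 := by
    simpa [Fin.sum_univ_five, g0, g1] using
      relation (degreeThreeInvariant_loop_add_two_cycle hij hik hjk)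
  have g3 : g 3 = 0 := by linear_combination (norm := noncomm_ring) loop_edge - loop
  have g2 : g 2 = 0 := h2.mul_right_eq_zero_iff.mp <| by
    linear_combination (norm := noncomm_ring) loop_cycle - loop - 2 * g3
  have g4 : g 4 = 0 := by simpa [g2, g3] using loop
  intro a
  fin_cases a <;> assumption

end DegreeThreeInvariant

/-- The five functions `x ↦ Tr(x³)`, `x ↦ Tr(x²·xᵀ)`, `x ↦ Tr(x²)·Tr(x)`,
`x ↦ Tr(x·xᵀ)·Tr(x)`, `x ↦ Tr(x)³` on 3×3 complex matrices are linearly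
independent over ℂ. -/
theorem linearIndependent_degree_three_invariants :
    LinearIndependent ℂ
      (![fun x => (x * x * x).trace,
         fun x => (x * x * xᵀ).trace,
         fun x => (x * x).trace * x.trace,
         fun x => (x * xᵀ).trace * x.trace,
         fun x => x.trace ^ 3] : Fin 5 → (Matrix (Fin 3) (Fin 3) ℂ → ℂ)) :=
  linearIndependent_degree_three_invariants_general
    (IsRegular.of_ne_zero (by norm_num)).right (by simp)
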